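/- For each P/T Petri net N = (S, A, T), place bisimilarity ~p is an equivalence relation on the set of markings of N (it is reflexive, symmetric, and transitive). -/

import Mathlib

/-- A transition of a P/T net: a triple (pre-set, label, post-set). -/
structure PNTrans (S A : Type) where
  pre : Multiset S
  label : A
  post : Multiset S
deriving DecidableEq

/-- A P/T Petri net over places `S` and labels `A`: a finite set of transitions,
each with a nonempty pre-set. -/
structure PetriNet (S A : Type) [DecidableEq S] [DecidableEq A] where
  T : Finset (PNTrans S A)
  pre_ne : ∀ t ∈ T, t.pre ≠ 0

/-- The additive closure `R⊕` of a place relation `R`: the least relation on markings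
containing `(θ, θ)` and closed under adding `R`-related places on both sides. -/
inductive AddClosure {S : Type} (R : S → S → Prop) : Multiset S → Multiset S → Prop
  | zero : AddClosure R 0 0
  | cons {s1 s2 : S} {m1 m2 : Multiset S} :
      R s1 s2 → AddClosure R m1 m2 → AddClosure R (s1 ::ₘ m1) (s2 ::ₘ m2)

/-- `Fires N m t m'` : transition `t` of `N` is enabled at marking `m` and its firing
produces `m' = (m ⊖ pre(t)) ⊕ post(t)`. -/
def Fires {S A : Type} [DecidableEq S] [DecidableEq A]
    (N : PetriNet S A) (m : Multiset S) (t : PNTrans S A) (m' : Multiset S) : Prop :=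
  t ∈ N.T ∧ t.pre ≤ m ∧ m' = m - t.pre + t.post

/-- A place bisimulation on `N`. -/
def IsPlaceBisim {S A : Type} [DecidableEq S] [DecidableEq A]
    (N : PetriNet S A) (R : S → S → Prop) : Prop :=
  ∀ m1 m2, AddClosure R m1 m2 →
    (∀ t1 m1', Fires N m1 t1 m1' →
      ∃ t2 m2', Fires N m2 t2 m2' ∧ AddClosure R t1.pre t2.pre ∧
        t1.label = t2.label ∧ AddClosure R t1.post t2.post ∧ AddClosure R m1' m2') ∧
    (∀ t2 m2', Fires N m2 t2 m2' →
      ∃ t1 m1', Fires N m1 t1 m1' ∧ AddClosure R t1.pre t2.pre ∧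
        t1.label = t2.label ∧ AddClosure R t1.post t2.post ∧ AddClosure R m1' m2')

/-- Place bisimilarity `m1 ~p m2`. -/
def PlaceBisimilar {S A : Type} [DecidableEq S] [DecidableEq A]
    (N : PetriNet S A) (m1 m2 : Multiset S) : Prop :=
  ∃ R : S → S → Prop, IsPlaceBisim N R ∧ AddClosure R m1 m2

/-- An interleaving bisimulation on the markings of `N`. -/
def IsIntBisim {S A : Type} [DecidableEq S] [DecidableEq A]
    (N : PetriNet S A) (Q : Multiset S → Multiset S → Prop) : Prop :=
  ∀ m1 m2, Q m1 m2 →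
    (∀ t1 m1', Fires N m1 t1 m1' →
      ∃ t2 m2', Fires N m2 t2 m2' ∧ t1.label = t2.label ∧ Q m1' m2') ∧
    (∀ t2 m2', Fires N m2 t2 m2' →
      ∃ t1 m1', Fires N m1 t1 m1' ∧ t1.label = t2.label ∧ Q m1' m2')

/-- Interleaving bisimilarity `m1 ~int m2`. -/
def IntBisimilar {S A : Type} [DecidableEq S] [DecidableEq A]
    (N : PetriNet S A) (m1 m2 : Multiset S) : Prop :=
  ∃ Q, IsIntBisim N Q ∧ Q m1 m2

/-- First projection of a linking. -/
def lproj1 {S : Type} (l : Multiset (S × S)) : Multiset S := l.map Prod.fst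

/-- Second projection of a linking. -/
def lproj2 {S : Type} (l : Multiset (S × S)) : Multiset S := l.map Prod.snd

/-- A structure-preserving bisimulation on `N`: a set of linkings. -/
def IsSpBisim {S A : Type} [DecidableEq S] [DecidableEq A]
    (N : PetriNet S A) (R : Set (Multiset (S × S))) : Prop :=
  ∀ l ∈ R, ∀ c ≤ l,
    (∀ t1 ∈ N.T, t1.pre = lproj1 c →
      ∃ t2 ∈ N.T, t1.label = t2.label ∧ t2.pre = lproj2 c ∧
        ∃ cb : Multiset (S × S), t1.post = lproj1 cb ∧ t2.post = lproj2 cb ∧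
          l - c + cb ∈ R) ∧
    (∀ t2 ∈ N.T, t2.pre = lproj2 c →
      ∃ t1 ∈ N.T, t1.label = t2.label ∧ t1.pre = lproj1 c ∧
        ∃ cb : Multiset (S × S), t1.post = lproj1 cb ∧ t2.post = lproj2 cb ∧
          l - c + cb ∈ R)

/-- Structure-preserving bisimilarity `m1 ~sp m2`. -/
def SpBisimilar {S A : Type} [DecidableEq S] [DecidableEq A]
    (N : PetriNet S A) (m1 m2 : Multiset S) : Prop :=
  ∃ (R : Set (Multiset (S × S))) (l : Multiset (S × S)),
    IsSpBisim N R ∧ l ∈ R ∧ lproj1 l = m1 ∧ lproj2 l = m2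

theorem addClosure_flip {S : Type} {R : S → S → Prop} {m1 m2 : Multiset S}
    (h : AddClosure R m1 m2) : AddClosure (fun a b => R b a) m2 m1 := by
  induction h with
  | zero => exact .zero
  | cons h _ ih => exact .cons h ih

theorem addClosure_refl {S : Type} (m : Multiset S) : AddClosure (fun a b => a = b) m m := by
  induction m using Multiset.induction with
  | empty => exact .zero
  | cons a m ih => exact .cons rfl ih

theorem addClosure_eq {S : Type} {m1 m2 : Multiset S}
    (h : AddClosure (fun a b => a = b) m1 m2) : m1 = m2 := by
  induction h with
  | zero => rfl
  | cons h _ ih => rw [h, ih]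

theorem addClosure_split {S : Type} {R Q : S → S → Prop} {m1 m3 : Multiset S}
    (h : AddClosure (fun a c => ∃ b, R a b ∧ Q b c) m1 m3) :
    ∃ m2, AddClosure R m1 m2 ∧ AddClosure Q m2 m3 := by
  induction h with
  | zero => exact ⟨0, .zero, .zero⟩
  | cons h _ ih =>
    obtain ⟨b, hb1, hb2⟩ := h
    obtain ⟨m, hm1, hm2⟩ := ih
    exact ⟨b ::ₘ m, .cons hb1 hm1, .cons hb2 hm2⟩

theorem addClosure_iff_rel {S : Type} {R : S → S → Prop} {m1 m2 : Multiset S} :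
    AddClosure R m1 m2 ↔ Multiset.Rel R m1 m2 := by
  constructor
  · intro h
    induction h with
    | zero => exact .zero
    | cons h _ ih => exact .cons h ih
  · intro h
    induction h with
    | zero => exact .zero
    | cons h _ ih => exact .cons h ih

theorem addClosure_comp {S : Type} {R Q : S → S → Prop} {m1 m2 m3 : Multiset S}
    (h : AddClosure R m1 m2) (h' : AddClosure Q m2 m3) :
    AddClosure (fun a c => ∃ b, R a b ∧ Q b c) m1 m3 := by
  induction h generalizing m3 with
  | zero =>
    rw [addClosure_iff_rel, Multiset.rel_zero_left] at h'
    subst h'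
    exact .zero
  | cons h _ ih =>
    rw [addClosure_iff_rel, Multiset.rel_cons_left] at h'
    obtain ⟨c, m, hc, hm, rfl⟩ := h'
    exact .cons ⟨_, h, hc⟩ (ih (addClosure_iff_rel.2 hm))

/-- place bisimilarity is an equivalence relation on markings. -/
theorem placeBisimilar_equivalence {S A : Type} [Fintype S] [Fintype A]
    [DecidableEq S] [DecidableEq A] (N : PetriNet S A) :
    Equivalence (PlaceBisimilar N) := by
  refine ⟨fun m => ⟨fun a b => a = b, ?_, addClosure_refl m⟩, ?_, ?_⟩
  · intro m1 m2 h
    obtain rfl := addClosure_eq h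
    exact ⟨fun t m' hf => ⟨t, m', hf, addClosure_refl _, rfl, addClosure_refl _,
        addClosure_refl _⟩,
      fun t m' hf => ⟨t, m', hf, addClosure_refl _, rfl, addClosure_refl _,
        addClosure_refl _⟩⟩
  · rintro x y ⟨R, hR, hxy⟩
    refine ⟨fun a b => R b a, ?_, addClosure_flip hxy⟩
    intro m1 m2 h
    obtain ⟨hl, hr⟩ := hR m2 m1 (addClosure_flip h)
    constructor
    · intro t m' hf
      obtain ⟨u, n', h1, h2, h3, h4, h5⟩ := hr t m' hf
      exact ⟨u, n', h1, addClosure_flip h2, h3.symm, addClosure_flip h4, addClosure_flip h5⟩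
    · intro t m' hf
      obtain ⟨u, n', h1, h2, h3, h4, h5⟩ := hl t m' hf
      exact ⟨u, n', h1, addClosure_flip h2, h3.symm, addClosure_flip h4, addClosure_flip h5⟩
  · rintro x y z ⟨R, hR, hxy⟩ ⟨Q, hQ, hyz⟩
    refine ⟨fun a c => ∃ b, R a b ∧ Q b c, ?_, addClosure_comp hxy hyz⟩
    intro m1 m3 h
    obtain ⟨m2, h12, h23⟩ := addClosure_split h
    obtain ⟨hRl, hRr⟩ := hR m1 m2 h12
    obtain ⟨hQl, hQr⟩ := hQ m2 m3 h23
    constructor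
    · intro t m' hf
      obtain ⟨u, n', h1, h2, h3, h4, h5⟩ := hRl t m' hf
      obtain ⟨v, k', g1, g2, g3, g4, g5⟩ := hQl u n' h1
      exact ⟨v, k', g1, addClosure_comp h2 g2, h3.trans g3, addClosure_comp h4 g4,
        addClosure_comp h5 g5⟩
    · intro t m' hf
      obtain ⟨u, n', h1, h2, h3, h4, h5⟩ := hQr t m' hf
      obtain ⟨v, k', g1, g2, g3, g4, g5⟩ := hRr u n' h1
      exact ⟨v, k', g1, addClosure_comp g2 h2, g3.trans h3, addClosure_comp g4 h4,
        addClosure_comp g5 h5⟩
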